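/- Let q₀,…,q_r be any basis of Sym^d(W*) with dual basis q₀*,…,q_r* ∈ Sym^d(W) under the apolarity pairing. Then for every f ∈ Sym^{kd}(W*): ((kd)!/d!^k) · f = ∑_{0 ≤ i₁,…,i_k ≤ r} D(q_{i₁}* ⋯ q_{i_k}*, f) · q_{i₁} ⋯ q_{i_k}. -/

import Mathlib

/-!
For `y : σ → A` and `L = ∑ j, y j x_j`, differentiation along powers of `L` evaluates polynomials:
`D(L ^ m, f) = m! f(y)` for `f` of degree `m`. Hence `L ^ d / d!` represents evaluation at `y` in
degree `d`, so it is the reproducing kernel `∑ i, qᵢ(y) qᵢ*(x)` of any pair of dual bases. Expanding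
the `k`-th power of this kernel in `D(L ^ (k * d), f) = (k * d)! f(y)`, with `y` the generic point,
gives the identity. Here `d! ≠ 0` in `K`, since otherwise `D` would kill `x_j ^ d`, contradicting
duality.
-/

open MvPolynomial

noncomputable section

def derivOp (K : Type*) [Field K] {σ : Type*} [Fintype σ] [DecidableEq σ]
    (a : σ →₀ ℕ) : Module.End K (MvPolynomial σ K) :=
  (Finset.univ.toList.map fun j : σ => ((MvPolynomial.pderiv j).toLinearMap ^ (a j))).prod

def apol {K : Type*} [Field K] {σ : Type*} [Fintype σ] [DecidableEq σ]
    (u P : MvPolynomial σ K) : MvPolynomial σ K :=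
  ∑ a ∈ u.support, u.coeff a • derivOp K a P

def apolS {K : Type*} [Field K] {σ : Type*} [Fintype σ] [DecidableEq σ]
    (u P : MvPolynomial σ K) : K :=
  MvPolynomial.constantCoeff (apol u P)

def MonIdx (m d : ℕ) : Type := {v : Fin m → ℕ // v ∈ Finset.Nat.antidiagonalTuple m d}

instance (m d : ℕ) : Fintype (MonIdx m d) := by unfold MonIdx; infer_instance
instance (m d : ℕ) : DecidableEq (MonIdx m d) := by unfold MonIdx; infer_instance

section PartialDerivatives

variable {R σ : Type*} [CommSemiring R]

theorem coeff_pderiv_pow (j : σ) (e : ℕ) (p : MvPolynomial σ R) (m : σ →₀ ℕ) :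
    coeff m (((pderiv j).toLinearMap ^ e) p) =
      coeff (m + Finsupp.single j e) p * ((m j + 1).ascFactorial e : R) := by
  induction e generalizing p with
  | zero => simp
  | succ e ih =>
    rw [pow_succ, Module.End.mul_apply, ih, Derivation.coeFn_coe, coeff_pderiv, add_assoc,
      ← Finsupp.single_add, Nat.ascFactorial_succ, Finsupp.add_apply, Finsupp.single_eq_same]
    push_cast
    ring

theorem coeff_list_prod_pderiv_pow (a : σ → ℕ) {l : List σ} (hl : l.Nodup)
    (p : MvPolynomial σ R) (m : σ →₀ ℕ) :
    coeff m ((l.map fun j ↦ (pderiv j).toLinearMap ^ a j).prod p) =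
      coeff (m + (l.map fun j ↦ Finsupp.single j (a j)).sum) p *
        ((l.map fun j ↦ (m j + 1).ascFactorial (a j)).prod : ℕ) := by
  induction l generalizing m with
  | nil => simp
  | cons j l ih =>
    obtain ⟨hj, hl⟩ := List.nodup_cons.mp hl
    have hm : (l.map fun i ↦ ((m + Finsupp.single j (a j)) i + 1).ascFactorial (a i)) =
        l.map fun i ↦ (m i + 1).ascFactorial (a i) :=
      List.map_congr_left fun i hi ↦ by
        simp [Finsupp.single_eq_of_ne (ne_of_mem_of_not_mem hi hj)]
    simp only [List.map_cons, List.prod_cons, List.sum_cons, Module.End.mul_apply]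
    rw [coeff_pderiv_pow, ih hl, hm, add_assoc]
    push_cast
    ring

end PartialDerivatives

/-- The multi-index factorial `a! = ∏ j, (a j)!`: the value of `∂ᵃ xᵃ`, and hence the weight of the
monomial `xᵃ` in the apolarity pairing. -/
def multiFactorial {σ : Type*} (a : σ →₀ ℕ) : ℕ := a.prod fun _ ↦ Nat.factorial

theorem multiFactorial_mul_multinomial {σ : Type*} (a : σ →₀ ℕ) :
    multiFactorial a * a.multinomial = a.degree.factorial :=
  Nat.multinomial_spec a.support a

section BaseChange

variable {R σ : Type*} [CommSemiring R] (A : Type*) [CommSemiring A] [Algebra R A]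

/-- The apolarity pairing against a fixed `f`, extended `A`-linearly in the other argument to
polynomials with coefficients in an `R`-algebra `A`. -/
def apolPairing (f : MvPolynomial σ R) : MvPolynomial σ A →ₗ[A] A :=
  ∑ a ∈ f.support, (algebraMap R A (coeff a f) * multiFactorial a) • lcoeff A a

variable {A}

theorem apolPairing_apply (f : MvPolynomial σ R) (U : MvPolynomial σ A) :
    apolPairing A f U =
      ∑ a ∈ f.support, algebraMap R A (coeff a f) * multiFactorial a * coeff a U := by
  simp [apolPairing]

theorem coeff_linearForm_pow [Fintype σ] (y : σ → A) (m : ℕ) (a : σ →₀ ℕ) :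
    coeff a ((∑ j, y j • X j) ^ m) =
      if a.degree = m then a.multinomial * a.prod fun j e ↦ y j ^ e else 0 :=
  coeff_linearCombination_X_pow_of_fintype y a m

theorem apolPairing_linearForm_pow [Fintype σ] {f : MvPolynomial σ R} {m : ℕ}
    (hf : f.IsHomogeneous m) (y : σ → A) :
    apolPairing A f ((∑ j, y j • X j) ^ m) = m.factorial * aeval y f := by
  have haeval : aeval y f =
      ∑ a ∈ f.support, algebraMap R A (coeff a f) * a.prod fun j e ↦ y j ^ e := rfl
  rw [apolPairing_apply, haeval, Finset.mul_sum]
  refine Finset.sum_congr rfl fun a ha ↦ ?_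
  have hdeg : a.degree = m := by_contra fun h ↦ mem_support_iff.mp ha (hf.coeff_eq_zero h)
  rw [coeff_linearForm_pow, if_pos hdeg, ← hdeg, ← multiFactorial_mul_multinomial, Nat.cast_mul]
  ring

variable {ι : Type*} [Fintype ι]

/-- The kernel `∑ i, qᵢ(y) qᵢ*(x)` of a pair of families, a polynomial in `x` depending on the
`A`-valued point `y`. -/
def reproducingKernel (q qstar : ι → MvPolynomial σ R) (y : σ → A) : MvPolynomial σ A :=
  ∑ i, C (aeval y (q i)) * map (algebraMap R A) (qstar i)

theorem coeff_reproducingKernel (q qstar : ι → MvPolynomial σ R) (y : σ → A) (a : σ →₀ ℕ) :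
    coeff a (reproducingKernel q qstar y) =
      ∑ i, aeval y (q i) * algebraMap R A (coeff a (qstar i)) := by
  simp only [reproducingKernel, coeff_sum, coeff_C_mul, coeff_map]

theorem reproducingKernel_pow (q qstar : ι → MvPolynomial σ R) (y : σ → A) (k : ℕ) :
    reproducingKernel q qstar y ^ k =
      reproducingKernel (fun t : Fin k → ι ↦ ∏ l, q (t l)) (fun t ↦ ∏ l, qstar (t l)) y := by
  simp only [reproducingKernel, Fintype.sum_pow, Finset.prod_mul_distrib, map_prod]

end BaseChange

section Apolarity

variable {K : Type*} [Field K] {σ : Type*} [Fintype σ] [DecidableEq σ]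

theorem constantCoeff_derivOp (a : σ →₀ ℕ) (p : MvPolynomial σ K) :
    constantCoeff (derivOp K a p) = coeff a p * multiFactorial a := by
  rw [constantCoeff_eq, derivOp, coeff_list_prod_pderiv_pow a (Finset.nodup_toList _),
    Finset.sum_map_toList, Finset.prod_map_toList, Finsupp.univ_sum_single, zero_add,
    multiFactorial, Finsupp.prod_fintype _ _ fun _ ↦ Nat.factorial_zero]
  simp [Nat.one_ascFactorial]

/-- The scalar apolarity pairing `apolS u` as a linear functional of its second argument. -/
def apolLinear (u : MvPolynomial σ K) : MvPolynomial σ K →ₗ[K] K :=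
  lcoeff K 0 ∘ₗ ∑ a ∈ u.support, coeff a u • derivOp K a

theorem apolLinear_apply (u p : MvPolynomial σ K) : apolLinear u p = apolS u p := by
  simp [apolLinear, apolS, apol, constantCoeff_eq]

theorem apolS_monomial (u : MvPolynomial σ K) (a : σ →₀ ℕ) (c : K) :
    apolS u (monomial a c) = c * multiFactorial a * coeff a u := by
  have hterm (b : σ →₀ ℕ) : constantCoeff (coeff b u • derivOp K b (monomial a c)) =
      if a = b then c * multiFactorial b * coeff b u else 0 := by
    rw [constantCoeff_smul, constantCoeff_derivOp, coeff_monomial, smul_eq_mul]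
    split_ifs <;> ring
  simp only [apolS, apol, map_sum, hterm, Finset.sum_ite_eq, mem_support_iff, ite_eq_left_iff,
    not_not]
  intro ha
  rw [ha, mul_zero]

theorem apolS_eq_apolPairing (u f : MvPolynomial σ K) : apolS u f = apolPairing K f u := by
  conv_lhs => rw [f.as_sum, ← apolLinear_apply, map_sum]
  simp only [apolLinear_apply, apolS_monomial, apolPairing_apply, Algebra.algebraMap_self_apply]

theorem apolPairing_C_mul_map {A : Type*} [CommSemiring A] [Algebra K A]
    (f u : MvPolynomial σ K) (c : A) :
    apolPairing A f (C c * map (algebraMap K A) u) = apolS u f • c := by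
  rw [apolS_eq_apolPairing, apolPairing_apply, apolPairing_apply, Finset.sum_smul]
  refine Finset.sum_congr rfl fun a _ ↦ ?_
  rw [coeff_C_mul, coeff_map, Algebra.smul_def, map_mul, map_mul, map_natCast,
    Algebra.algebraMap_self_apply]
  ring

theorem apolPairing_reproducingKernel {ι A : Type*} [Fintype ι] [CommSemiring A] [Algebra K A]
    (f : MvPolynomial σ K) (q qstar : ι → MvPolynomial σ K) (y : σ → A) :
    apolPairing A f (reproducingKernel q qstar y) = ∑ i, apolS (qstar i) f • aeval y (q i) := by
  simp only [reproducingKernel, map_sum (apolPairing A f), apolPairing_C_mul_map]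

theorem sum_apolS_smul_eq_of_mem_span {ι : Type*} [Fintype ι] [DecidableEq ι]
    {q qstar : ι → MvPolynomial σ K}
    (hdual : ∀ i j, apolS (qstar i) (q j) = if i = j then 1 else 0)
    {g : MvPolynomial σ K} (hg : g ∈ Submodule.span K (Set.range q)) :
    ∑ i, apolS (qstar i) g • q i = g := by
  let expansion : MvPolynomial σ K →ₗ[K] MvPolynomial σ K :=
    ∑ i, (apolLinear (qstar i)).smulRight (q i)
  have hexpansion (p : MvPolynomial σ K) : expansion p = ∑ i, apolS (qstar i) p • q i := by
    simp [expansion, apolLinear_apply]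
  have hbasis : Set.EqOn expansion (LinearMap.id (R := K)) (Set.range q) := by
    rintro _ ⟨j, rfl⟩
    simp [hexpansion, hdual]
  rw [← hexpansion, LinearMap.eqOn_span hbasis hg, LinearMap.id_apply]

/-- The families `q` and `q*` reproduce every form of degree `d` through the apolarity pairing: the
property of dual bases behind the identity, shared by overcomplete families (frames). -/
def IsReproducing {ι : Type*} [Fintype ι] (d : ℕ) (q qstar : ι → MvPolynomial σ K) : Prop :=
  ∀ g : MvPolynomial σ K, g.IsHomogeneous d → ∑ i, apolS (qstar i) g • q i = g

theorem isReproducing_of_dual {ι : Type*} [Fintype ι] [DecidableEq ι] {d : ℕ}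
    {q qstar : ι → MvPolynomial σ K}
    (hspan : homogeneousSubmodule σ K d ≤ Submodule.span K (Set.range q))
    (hdual : ∀ i j, apolS (qstar i) (q j) = if i = j then 1 else 0) : IsReproducing d q qstar :=
  fun _ hg ↦ sum_apolS_smul_eq_of_mem_span hdual (hspan hg)

namespace IsReproducing

variable {ι : Type*} [Fintype ι] {d : ℕ} {q qstar : ι → MvPolynomial σ K}

theorem factorial_ne_zero [Nonempty σ] (h : IsReproducing d q qstar) : (d.factorial : K) ≠ 0 := by
  intro hd
  obtain ⟨j⟩ := ‹Nonempty σ›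
  have hpair (i : ι) : apolS (qstar i) (X j ^ d) = 0 := by
    simp [X_pow_eq_monomial, apolS_monomial, multiFactorial, hd]
  have hpow : (X j ^ d : MvPolynomial σ K) = 0 := by
    simpa [hpair] using (h _ (isHomogeneous_X_pow j d)).symm
  exact pow_ne_zero d (X_ne_zero j) hpow

variable {A : Type*} [CommSemiring A] [Algebra K A]

theorem multiFactorial_mul_coeff_reproducingKernel (h : IsReproducing d q qstar) (y : σ → A)
    {a : σ →₀ ℕ} (ha : a.degree = d) :
    multiFactorial a * coeff a (reproducingKernel q qstar y) = a.prod fun j e ↦ y j ^ e := by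
  have hmonomial := congrArg (aeval y) (h (monomial a 1) (isHomogeneous_monomial 1 ha))
  rw [aeval_monomial, (algebraMap K A).map_one, one_mul] at hmonomial
  rw [← hmonomial, map_sum, coeff_reproducingKernel, Finset.mul_sum]
  refine Finset.sum_congr rfl fun i _ ↦ ?_
  rw [apolS_monomial, one_mul, map_smul, Algebra.smul_def, map_mul, map_natCast]
  ring

theorem factorial_smul_reproducingKernel (h : IsReproducing d q qstar)
    (hqstar : ∀ i, (qstar i).IsHomogeneous d) (y : σ → A) :
    (d.factorial : A) • reproducingKernel q qstar y = (∑ j, y j • X j) ^ d := by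
  ext a
  rw [coeff_smul, smul_eq_mul, coeff_linearForm_pow]
  split_ifs with ha
  · rw [← h.multiFactorial_mul_coeff_reproducingKernel y ha, ← ha,
      ← multiFactorial_mul_multinomial, Nat.cast_mul]
    ring
  · have hcoeff (i : ι) : coeff a (qstar i) = 0 := (hqstar i).coeff_eq_zero ha
    simp [coeff_reproducingKernel, hcoeff]

theorem factorial_pow_mul_sum_apolS_prod (h : IsReproducing d q qstar)
    (hqstar : ∀ i, (qstar i).IsHomogeneous d) {k : ℕ} {f : MvPolynomial σ K}
    (hf : f.IsHomogeneous (k * d)) (y : σ → A) :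
    (d.factorial : A) ^ k * ∑ t : Fin k → ι, apolS (∏ l, qstar (t l)) f • aeval y (∏ l, q (t l)) =
      (k * d).factorial * aeval y f :=
  calc
    _ = (d.factorial : A) ^ k * apolPairing A f (reproducingKernel q qstar y ^ k) := by
      rw [reproducingKernel_pow, apolPairing_reproducingKernel]
    _ = apolPairing A f ((∑ j, y j • X j) ^ (k * d)) := by
      rw [← smul_eq_mul, ← map_smul, ← smul_pow, h.factorial_smul_reproducingKernel hqstar,
        ← pow_mul, mul_comm]
    _ = (k * d).factorial * aeval y f := apolPairing_linearForm_pow hf y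

end IsReproducing

end Apolarity

theorem taylor_identity_general_basis_general {K σ ι : Type*} [Field K] [Fintype σ]
    [DecidableEq σ] [Nonempty σ] [Fintype ι] {d k : ℕ} {q qstar : ι → MvPolynomial σ K}
    (hqstar : ∀ i, (qstar i).IsHomogeneous d) (h : IsReproducing d q qstar)
    {f : MvPolynomial σ K} (hf : f.IsHomogeneous (k * d)) :
    ((k * d).factorial / d.factorial ^ k : K) • f =
      ∑ t : Fin k → ι, apolS (∏ l, qstar (t l)) f • ∏ l, q (t l) := by
  have hd : (d.factorial : K) ^ k ≠ 0 := pow_ne_zero k h.factorial_ne_zero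
  have hgeneric := h.factorial_pow_mul_sum_apolS_prod hqstar hf (X : σ → MvPolynomial σ K)
  simp only [aeval_X_left_apply] at hgeneric
  rw [div_eq_inv_mul, mul_smul, inv_smul_eq_iff₀ hd, smul_eq_C_mul, smul_eq_C_mul, map_pow,
    map_natCast, map_natCast, hgeneric]

/-- Taylor-like identity for an arbitrary basis `q₀,…,q_r` of
`Sym^d(W*)` with dual basis `q₀*,…,q_r* ∈ Sym^d(W)` under the apolarity
pairing: for every `f ∈ Sym^{kd}(W*)`,
`((kd)!/d!^k)·f = ∑_{i₁,…,i_k} D(q_{i₁}*⋯q_{i_k}*, f)·q_{i₁}⋯q_{i_k}`. -/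
theorem taylor_identity_general_basis
    (K : Type*) [Field K] (n d k : ℕ) (hd : 1 ≤ d) (hk : 1 ≤ k)
    (hchar : ∀ i : ℕ, 0 < i → i ≤ k * d → (i : K) ≠ 0)
    (q qstar : MonIdx (n + 1) d → MvPolynomial (Fin (n + 1)) K)
    (hq : ∀ i, (q i).IsHomogeneous d) (hqstar : ∀ i, (qstar i).IsHomogeneous d)
    (hspan : Submodule.span K (Set.range q) = homogeneousSubmodule (Fin (n + 1)) K d)
    (hdual : ∀ i j, apolS (qstar i) (q j) = if i = j then 1 else 0)
    (f : MvPolynomial (Fin (n + 1)) K) (hf : f.IsHomogeneous (k * d)) :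
    ((Nat.factorial (k * d) : K) / (Nat.factorial d : K) ^ k) • f
      = ∑ t : Fin k → MonIdx (n + 1) d,
          apolS (∏ l, qstar (t l)) f • ∏ l, q (t l) :=
  taylor_identity_general_basis_general hqstar (isReproducing_of_dual hspan.ge hdual) hf
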